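/- For any β ∈ (1,2], the β-Lyndon intervals are pairwise disjoint: if [t_L, t_R) and [t_L', t_R') are β-Lyndon intervals generated by distinct β-Lyndon words, then [t_L, t_R) ∩ [t_L', t_R') = ∅. -/

import Mathlib

open Set Filter MeasureTheory

/-- The β-transformation `x ↦ βx (mod 1)`. -/
noncomputable def Tbeta (β x : ℝ) : ℝ := Int.fract (β * x)

/-- The survivor set `K_β(t) = {x ∈ [0,1) : T_β^n x ≥ t for all n ≥ 0}`. -/
def Kset (β t : ℝ) : Set ℝ := {x | x ∈ Set.Ico (0 : ℝ) 1 ∧ ∀ n : ℕ, t ≤ (Tbeta β)^[n] x}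

/-- Strict lexicographic order on sequences of naturals. -/
def seqLt (x y : ℕ → ℕ) : Prop := ∃ n, (∀ i, i < n → x i = y i) ∧ x n < y n

/-- Lexicographic order on sequences of naturals. -/
def seqLe (x y : ℕ → ℕ) : Prop := x = y ∨ seqLt x y

/-- The `n`-th iterate of the left shift. -/
def shiftN (n : ℕ) (x : ℕ → ℕ) : ℕ → ℕ := fun i => x (i + n)

/-- The sequence `w 0^∞`. -/
def wordSeq (w : List ℕ) : ℕ → ℕ := fun i => w.getD i 0

/-- The periodic sequence `w^∞`. -/
def perSeq (w : List ℕ) : ℕ → ℕ := fun i => w.getD (i % w.length) 0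

/-- The sequence obtained by concatenating the word `w` with the sequence `x`. -/
def catSeq (w : List ℕ) (x : ℕ → ℕ) : ℕ → ℕ :=
  fun i => if i < w.length then w.getD i 0 else x (i - w.length)

/-- The greedy β-expansion of `t`: the digit `b_{i+1}` is `⌊β T_β^i t⌋`. -/
noncomputable def greedy (β t : ℝ) : ℕ → ℕ := fun i => (⌊β * (Tbeta β)^[i] t⌋).toNat

/-- `d` is the quasi-greedy β-expansion of `1`: the lexicographically largest
sequence in `{0,1}^ℕ` not ending in `0^∞` whose digits sum to `1` in base `β`. -/
def IsQuasiGreedy (β : ℝ) (d : ℕ → ℕ) : Prop :=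
  (∀ i, d i ≤ 1) ∧ (¬ ∃ N, ∀ n, N ≤ n → d n = 0) ∧
  (∑' i : ℕ, (d i : ℝ) / β ^ (i + 1) = 1) ∧
  ∀ e : ℕ → ℕ, (∀ i, e i ≤ 1) → (¬ ∃ N, ∀ n, N ≤ n → e n = 0) →
    (∑' i : ℕ, (e i : ℝ) / β ^ (i + 1) = 1) → seqLe e d

/-- `s = s_1…s_p` is a β-Lyndon word: `s_{i+1}…s_p ≻ s_1…s_{p-i}` for `1 ≤ i < p`
and `σ^n(s^∞) ≺ δ(β)` for all `n ≥ 0`. -/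
def IsBetaLyndon (β : ℝ) (s : List ℕ) : Prop :=
  s ≠ [] ∧ (∀ a ∈ s, a ≤ 1) ∧
  (∀ i, 1 ≤ i → i < s.length →
    seqLt (wordSeq (s.take (s.length - i))) (wordSeq (s.drop i))) ∧
  (∀ d : ℕ → ℕ, IsQuasiGreedy β d → ∀ n : ℕ, seqLt (shiftN n (perSeq s)) d)

/-- Left endpoint `t_L = Σ_{i=1}^p s_i β^{-i}` of the β-Lyndon interval generated by `s`. -/
noncomputable def lyndonLeft (β : ℝ) (s : List ℕ) : ℝ :=
  ∑ i ∈ Finset.range s.length, (s.getD i 0 : ℝ) / β ^ (i + 1)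

/-- Right endpoint `t_R = (β^p/(β^p - 1)) t_L` of the β-Lyndon interval generated by `s`. -/
noncomputable def lyndonRight (β : ℝ) (s : List ℕ) : ℝ :=
  β ^ s.length / (β ^ s.length - 1) * lyndonLeft β s

/-- The union of all β-Lyndon intervals `[t_L, t_R)`. -/
noncomputable def lyndonUnionIco (β : ℝ) : Set ℝ :=
  ⋃ s ∈ {s : List ℕ | IsBetaLyndon β s}, Set.Ico (lyndonLeft β s) (lyndonRight β s)

/-- The symbolic survivor set `K̃_β(t)` with upper bound sequence `d = δ(β)`. -/
def Ktilde (β t : ℝ) (d : ℕ → ℕ) : Set (ℕ → ℕ) :=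
  {x | (∀ i, x i ≤ 1) ∧ ∀ n : ℕ, seqLe (greedy β t) (shiftN n x) ∧ seqLe (shiftN n x) d}

/-- The set-valued bifurcation set `E_β`. -/
def Eset (β : ℝ) : Set ℝ :=
  {t | t ∈ Set.Ico (0 : ℝ) 1 ∧ ∀ t', t < t' → t' < 1 → Kset β t' ≠ Kset β t}

/-- The dimension bifurcation set `B_β`. -/
def Bset (β : ℝ) : Set ℝ :=
  {t | t ∈ Set.Ico (0 : ℝ) 1 ∧ ∀ t', t < t' → t' < 1 → dimH (Kset β t') ≠ dimH (Kset β t)}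

/-- `β` is a multinacci number: `β^{m+1} = β^m + ⋯ + β + 1` for some `m ≥ 1`. -/
def IsMultinacci (β : ℝ) : Prop :=
  ∃ m : ℕ, 1 ≤ m ∧ β ^ (m + 1) = ∑ i ∈ Finset.range (m + 1), β ^ i

noncomputable def bval (β : ℝ) (x : ℕ → ℕ) : ℝ := ∑' i : ℕ, (x i : ℝ) / β ^ (i + 1)

lemma bval_summable {β : ℝ} (hβ : 1 < β) {x : ℕ → ℕ} (hx : ∀ i, x i ≤ 1) :
    Summable (fun i : ℕ => (x i : ℝ) / β ^ (i + 1)) := by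
  have h0 : (0:ℝ) < β := by linarith
  have hg : Summable (fun i : ℕ => (β⁻¹) ^ i) :=
    summable_geometric_of_lt_one (by positivity) (inv_lt_one_of_one_lt₀ hβ)
  refine Summable.of_nonneg_of_le (fun i => by positivity) (fun i => ?_) hg
  have h1 : (x i : ℝ) ≤ 1 := by exact_mod_cast hx i
  rw [inv_pow, ← one_div]
  apply div_le_div₀ zero_le_one h1 (by positivity)
  exact pow_le_pow_right₀ hβ.le (Nat.le_succ i)

lemma bval_nonneg {β : ℝ} (hβ : 1 < β) (x : ℕ → ℕ) : 0 ≤ bval β x := by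
  have h0 : (0:ℝ) < β := by linarith
  exact tsum_nonneg (fun i => by positivity)

lemma bval_pos {β : ℝ} (hβ : 1 < β) {x : ℕ → ℕ} (hx : ∀ i, x i ≤ 1) (k : ℕ) (hk : x k ≠ 0) :
    0 < bval β x := by
  have h0 : (0:ℝ) < β := by linarith
  have hk' : (0:ℝ) < x k := by exact_mod_cast Nat.pos_of_ne_zero hk
  exact (bval_summable hβ hx).tsum_pos (fun i => by positivity) k (by positivity)

lemma bval_le {β : ℝ} (hβ : 1 < β) {x : ℕ → ℕ} (hx : ∀ i, x i ≤ 1) :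
    bval β x ≤ bval β (fun _ => 1) := by
  have h0 : (0:ℝ) < β := by linarith
  refine (bval_summable hβ hx).tsum_le_tsum (fun i => ?_) (bval_summable hβ (fun _ => le_rfl))
  have h1 : (x i : ℝ) ≤ 1 := by exact_mod_cast hx i
  push_cast
  gcongr

lemma bval_split {β : ℝ} (hβ : 1 < β) {x : ℕ → ℕ} (hx : ∀ i, x i ≤ 1) (n : ℕ) :
    bval β x = ∑ i ∈ Finset.range n, (x i : ℝ) / β ^ (i + 1) + bval β (shiftN n x) / β ^ n := by
  have h0 : (0:ℝ) < β := by linarith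
  unfold bval
  rw [← (bval_summable hβ hx).sum_add_tsum_nat_add n, ← tsum_div_const]
  congr 1
  apply tsum_congr
  intro i
  rw [shiftN, div_div, ← pow_add]
  congr 2
  ring

lemma bval_split' {β : ℝ} (hβ : 1 < β) {x : ℕ → ℕ} (hx : ∀ i, x i ≤ 1) (n : ℕ) :
    bval β x = ∑ i ∈ Finset.range n, (x i : ℝ) / β ^ (i + 1) + (x n : ℝ) / β ^ (n + 1) +
      bval β (shiftN (n + 1) x) / β ^ (n + 1) := by
  rw [bval_split hβ hx (n + 1), Finset.sum_range_succ]

lemma shiftN_le {x : ℕ → ℕ} (hx : ∀ i, x i ≤ 1) (n : ℕ) : ∀ i, shiftN n x i ≤ 1 :=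
  fun i => hx (i + n)

lemma bval_lt_aux {β : ℝ} (hβ : 1 < β) {x y : ℕ → ℕ} (hx : ∀ i, x i ≤ 1) (hy : ∀ i, y i ≤ 1)
    (n : ℕ) (he : ∀ i, i < n → x i = y i) (hn : x n < y n) :
    bval β x ≤ bval β y + (bval β (shiftN (n + 1) x) - 1) / β ^ (n + 1) := by
  have h0 : (0:ℝ) < β := by linarith
  have hxn : x n = 0 := by have := hy n; omega
  have hyn : y n = 1 := by have := hy n; omega
  rw [bval_split' hβ hx n, bval_split' hβ hy n, hxn, hyn,
    Finset.sum_congr rfl (fun i hi => by rw [he i (Finset.mem_range.1 hi)])]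
  have := bval_nonneg hβ (shiftN (n + 1) y)
  have : 0 ≤ bval β (shiftN (n + 1) y) / β ^ (n + 1) := by positivity
  rw [sub_div]
  push_cast
  rw [zero_div]
  linarith

lemma bval_le_one {β : ℝ} (hβ : 1 < β) {x d : ℕ → ℕ} (hx : ∀ i, x i ≤ 1) (hd : ∀ i, d i ≤ 1)
    (hd1 : bval β d = 1) (h : ∀ n, seqLt (shiftN n x) d) (n : ℕ) :
    bval β (shiftN n x) ≤ 1 := by
  have h0 : (0:ℝ) < β := by linarith
  set C := bval β (fun _ => 1) with hC
  have hC0 : 0 ≤ C := bval_nonneg hβ _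
  have key : ∀ k m : ℕ, bval β (shiftN m x) ≤ 1 + C * (β⁻¹) ^ k := by
    intro k
    induction k with
    | zero => intro m; have := bval_le hβ (shiftN_le hx m); simp; linarith
    | succ k ih =>
      intro m
      obtain ⟨j, he, hj⟩ := h m
      have h1 := bval_lt_aux hβ (shiftN_le hx m) hd j he hj
      have h2 : shiftN (j + 1) (shiftN m x) = shiftN (j + 1 + m) x := by
        funext i; simp only [shiftN]; congr 1; ring
      rw [h2, hd1] at h1
      refine h1.trans ?_
      have h3 := ih (j + 1 + m)
      have h4 : (bval β (shiftN (j + 1 + m) x) - 1) / β ^ (j + 1) ≤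
          (C * (β⁻¹) ^ k) / β ^ (j + 1) := by gcongr; linarith
      have h5 : (C * (β⁻¹) ^ k) / β ^ (j + 1) ≤ (C * (β⁻¹) ^ k) / β ^ 1 := by
        apply div_le_div_of_nonneg_left (by positivity) (by positivity)
        exact pow_le_pow_right₀ hβ.le (by omega)
      have h6 : (C * (β⁻¹) ^ k) / β ^ 1 = C * (β⁻¹) ^ (k + 1) := by
        rw [pow_succ]; ring
      linarith
  have ht : Tendsto (fun k : ℕ => 1 + C * (β⁻¹) ^ k) atTop (nhds (1 + C * 0)) :=
    ((tendsto_pow_atTop_nhds_zero_of_lt_one (by positivity)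
      (inv_lt_one_of_one_lt₀ hβ)).const_mul C).const_add 1
  rw [mul_zero, add_zero] at ht
  exact ge_of_tendsto' ht (fun k => key k n)

/-- remainders of the quasi-greedy algorithm -/
noncomputable def qrem (β : ℝ) : ℕ → ℝ
  | 0 => 1
  | n + 1 => β * qrem β n - (if 1 < β * qrem β n then 1 else 0)

noncomputable def qdig (β : ℝ) (n : ℕ) : ℕ := if 1 < β * qrem β n then 1 else 0

lemma qrem_succ (β : ℝ) (n : ℕ) : qrem β (n + 1) = β * qrem β n - qdig β n := by
  rw [qrem, qdig]; push_cast; rfl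

lemma qdig_le (β : ℝ) (n : ℕ) : qdig β n ≤ 1 := by
  unfold qdig; split_ifs <;> simp

lemma qrem_mem {β : ℝ} (hβ : β ∈ Set.Ioc (1 : ℝ) 2) (n : ℕ) : 0 < qrem β n ∧ qrem β n ≤ 1 := by
  obtain ⟨h1, h2⟩ := hβ
  induction n with
  | zero => simp [qrem]
  | succ n ih =>
    rw [qrem]
    have : 0 < β * qrem β n := mul_pos (by linarith) ih.1
    split_ifs with h
    · constructor <;> nlinarith
    · constructor <;> linarith

lemma qrem_sum {β : ℝ} (hβ : β ∈ Set.Ioc (1 : ℝ) 2) (n : ℕ) :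
    ∑ i ∈ Finset.range n, (qdig β i : ℝ) / β ^ (i + 1) = 1 - qrem β n / β ^ n := by
  have h0 : (0:ℝ) < β := by linarith [hβ.1]
  induction n with
  | zero => simp [qrem]
  | succ n ih =>
    rw [Finset.sum_range_succ, ih, qrem_succ]
    field_simp
    ring

lemma qdig_val {β : ℝ} (hβ : β ∈ Set.Ioc (1 : ℝ) 2) : bval β (qdig β) = 1 := by
  have h0 : (0:ℝ) < β := by linarith [hβ.1]
  have h1 := (bval_summable hβ.1 (qdig_le β)).hasSum.tendsto_sum_nat
  refine tendsto_nhds_unique h1 ?_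
  simp_rw [qrem_sum hβ]
  have h2 : Tendsto (fun n : ℕ => qrem β n / β ^ n) atTop (nhds 0) := by
    refine squeeze_zero (fun n => ?_) (fun n => ?_)
      (tendsto_pow_atTop_nhds_zero_of_lt_one (r := β⁻¹) (by positivity)
      (inv_lt_one_of_one_lt₀ hβ.1))
    · have := (qrem_mem hβ n).1; positivity
    · rw [inv_pow, ← one_div]
      have := (qrem_mem hβ n).2
      gcongr
  simpa using h2.const_sub 1

lemma qrem_eq {β : ℝ} (hβ : β ∈ Set.Ioc (1 : ℝ) 2) {e : ℕ → ℕ} (he : ∀ i, e i ≤ 1)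
    (hv : bval β e = 1) (n : ℕ) (h : ∀ i, i < n → e i = qdig β i) :
    bval β (shiftN n e) = qrem β n := by
  have h0 : (0:ℝ) < β := by linarith [hβ.1]
  rw [bval_split hβ.1 he n, Finset.sum_congr rfl (fun i hi => by rw [h i (Finset.mem_range.1 hi)]),
    qrem_sum hβ] at hv
  have : bval β (shiftN n e) / β ^ n = qrem β n / β ^ n := by linarith
  field_simp at this
  exact this

lemma quasi_exists {β : ℝ} (hβ : β ∈ Set.Ioc (1 : ℝ) 2) : IsQuasiGreedy β (qdig β) := by
  have h0 : (0:ℝ) < β := by linarith [hβ.1]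
  refine ⟨qdig_le β, ?_, qdig_val hβ, ?_⟩
  · rintro ⟨N, hN⟩
    have h1 := qrem_eq hβ (qdig_le β) (qdig_val hβ) N (fun _ _ => rfl)
    have h2 : bval β (shiftN N (qdig β)) = 0 := by
      unfold bval
      have : ∀ i, shiftN N (qdig β) i = 0 := fun i => hN _ (by omega)
      simp [this]
    linarith [(qrem_mem hβ N).1]
  · intro e he hinf hv
    by_cases heq : e = qdig β
    · exact Or.inl heq
    right
    have hex : ∃ n, e n ≠ qdig β n := Function.ne_iff.1 heq
    classical
    refine ⟨Nat.find hex, fun i hi => not_not.1 (Nat.find_min hex hi), ?_⟩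
    have hlt : ∀ i, i < Nat.find hex → e i = qdig β i := fun i hi => not_not.1 (Nat.find_min hex hi)
    have hne := Nat.find_spec hex
    generalize Nat.find hex = n at *
    by_contra hcon
    have hn1 : e n = 1 := by have := he n; omega
    have hd0 : qdig β n = 0 := by have := he n; omega
    have hr : β * qrem β n ≤ 1 := by
      by_contra hc
      rw [qdig, if_pos (not_le.1 hc)] at hd0
      omega
    have hq := qrem_eq hβ he hv n hlt
    have hsp := bval_split hβ.1 (shiftN_le he n) 1
    have hpos : 0 < bval β (shiftN 1 (shiftN n e)) := by
      push Not at hinf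
      obtain ⟨m, hm, hm'⟩ := hinf (n + 1)
      apply bval_pos hβ.1 (shiftN_le (shiftN_le he n) 1) (m - (n + 1))
      simp only [shiftN]
      rwa [show m - (n + 1) + 1 + n = m by omega]
    have hz : shiftN n e 0 = 1 := by simp [shiftN, hn1]
    rw [hq] at hsp
    simp only [Finset.sum_range_one, hz] at hsp
    rw [hsp] at hr
    field_simp at hr
    push_cast at hr
    nlinarith [mul_pos h0 hpos]

lemma getD_le {s : List ℕ} (h : ∀ a ∈ s, a ≤ 1) (i : ℕ) : s.getD i 0 ≤ 1 := by
  by_cases hi : i < s.length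
  · rw [List.getD_eq_getElem _ _ hi]; exact h _ (List.getElem_mem hi)
  · rw [List.getD_eq_default _ _ (by omega)]; omega

lemma left_eq {β : ℝ} (hβ : 1 < β) (s : List ℕ) (h : ∀ a ∈ s, a ≤ 1) :
    lyndonLeft β s = bval β (wordSeq s) := by
  rw [bval_split hβ (x := wordSeq s) (getD_le h) s.length]
  have : ∀ i, shiftN s.length (wordSeq s) i = 0 := fun i => by
    simp only [shiftN, wordSeq]; rw [List.getD_eq_default _ _ (by omega)]
  have h2 : bval β (shiftN s.length (wordSeq s)) = 0 := by simp [bval, this]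
  rw [h2]; simp [lyndonLeft, wordSeq]

lemma right_eq {β : ℝ} (hβ : 1 < β) (s : List ℕ) (hne : s ≠ []) (h : ∀ a ∈ s, a ≤ 1) :
    lyndonRight β s = bval β (perSeq s) := by
  have h0 : (0:ℝ) < β := by linarith
  have hp : s.length ≠ 0 := by simpa using hne
  have h1 := bval_split hβ (x := perSeq s) (fun i => getD_le h _) s.length
  have h2 : shiftN s.length (perSeq s) = perSeq s := by
    funext i; simp [shiftN, perSeq]
  have h3 : ∑ i ∈ Finset.range s.length, (perSeq s i : ℝ) / β ^ (i + 1) = lyndonLeft β s := by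
    apply Finset.sum_congr rfl
    intro i hi
    rw [perSeq, Nat.mod_eq_of_lt (Finset.mem_range.1 hi)]
  rw [h2, h3] at h1
  have h4 : 1 < β ^ s.length := one_lt_pow₀ hβ hp
  have h5 : β ^ s.length - 1 ≠ 0 := by linarith
  unfold lyndonRight
  field_simp at h1 ⊢
  linarith

lemma le_of_seqLt {β : ℝ} (hβ : β ∈ Set.Ioc (1 : ℝ) 2) {s s' : List ℕ}
    (hs : IsBetaLyndon β s) (hs' : IsBetaLyndon β s')
    (h : seqLt (perSeq s) (wordSeq s')) : lyndonRight β s ≤ lyndonLeft β s' := by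
  have h0 : (0:ℝ) < β := by linarith [hβ.1]
  rw [right_eq hβ.1 s hs.1 hs.2.1, left_eq hβ.1 s' hs'.2.1]
  obtain ⟨n, he, hn⟩ := h
  have hx : ∀ i, perSeq s i ≤ 1 := fun i => getD_le hs.2.1 _
  have h1 := bval_lt_aux hβ.1 hx (getD_le hs'.2.1) n he hn
  have h2 := bval_le_one hβ.1 hx (qdig_le β) (qdig_val hβ)
    (hs.2.2.2 _ (quasi_exists hβ)) (n + 1)
  have : (bval β (shiftN (n + 1) (perSeq s)) - 1) / β ^ (n + 1) ≤ 0 :=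
    div_nonpos_of_nonpos_of_nonneg (by linarith) (by positivity)
  change bval β (perSeq s) ≤ bval β (wordSeq s') + _ at h1
  linarith

/-- prefix case -/
lemma prefix_case {β : ℝ} {s s' : List ℕ} (hs : IsBetaLyndon β s) (hs' : IsBetaLyndon β s')
    (hl : s.length < s'.length) (hpre : ∀ i, i < s.length → s.getD i 0 = s'.getD i 0) :
    seqLt (perSeq s) (wordSeq s') := by
  have hp : 0 < s.length := List.length_pos_iff.2 hs.1
  obtain ⟨k, he, hk⟩ := hs'.2.2.1 s.length hp hl
  have hkl : s.length + k < s'.length := by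
    by_contra hc
    simp only [wordSeq] at hk
    rw [List.getD_eq_default (s'.drop s.length) _ (by simp; omega)] at hk
    omega
  have htake : ∀ i, i ≤ k → wordSeq (s'.take (s'.length - s.length)) i = s'.getD i 0 := by
    intro i hi
    simp only [wordSeq, List.getD_eq_getElem?_getD]
    rw [List.getElem?_take_of_lt (by omega)]
  have hdrop : ∀ i, wordSeq (s'.drop s.length) i = s'.getD (s.length + i) 0 := by
    intro i
    simp only [wordSeq, List.getD_eq_getElem?_getD, List.getElem?_drop]
  have hag : ∀ i, i < s.length + k → perSeq s i = s'.getD i 0 := by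
    intro i
    induction i using Nat.strong_induction_on with
    | _ i ih =>
      intro hi
      by_cases hip : i < s.length
      · rw [perSeq, Nat.mod_eq_of_lt hip, hpre i hip]
      · have h1 := ih (i - s.length) (by omega) (by omega)
        have h2 := he (i - s.length) (by omega)
        rw [htake _ (by omega), hdrop, show s.length + (i - s.length) = i by omega] at h2
        rw [← h2, ← h1, perSeq, perSeq, Nat.mod_eq_sub_mod (by omega : s.length ≤ i)]
  refine ⟨s.length + k, hag, ?_⟩
  rw [htake k le_rfl, hdrop, ← hag k (by omega)] at hk
  have : perSeq s (s.length + k) = perSeq s k := by simp [perSeq]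
  rw [this]
  exact hk

lemma comb {β : ℝ} {s s' : List ℕ} (hs : IsBetaLyndon β s) (hs' : IsBetaLyndon β s')
    (hl : s.length ≤ s'.length) (hne : s ≠ s') :
    seqLt (perSeq s) (wordSeq s') ∨ seqLt (perSeq s') (wordSeq s) := by
  by_cases hpre : ∀ i, i < s.length → s.getD i 0 = s'.getD i 0
  · left
    rcases hl.lt_or_eq with hl | hl
    · exact prefix_case hs hs' hl hpre
    · exfalso
      apply hne
      apply List.ext_getElem hl
      intro i h1 h2
      have := hpre i h1
      rwa [List.getD_eq_getElem _ _ h1, List.getD_eq_getElem _ _ h2] at this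
  · push Not at hpre
    classical
    have hspec := Nat.find_spec hpre
    have hmin : ∀ i, i < Nat.find hpre → s.getD i 0 = s'.getD i 0 := by
      intro i hi
      have := Nat.find_min hpre hi
      by_contra hc
      exact this ⟨by omega, hc⟩
    generalize Nat.find hpre = n at *
    obtain ⟨hn, hd⟩ := hspec
    have p1 : ∀ i, i ≤ n → perSeq s i = s.getD i 0 := fun i hi => by
      rw [perSeq, Nat.mod_eq_of_lt (by omega)]
    have p2 : ∀ i, i ≤ n → perSeq s' i = s'.getD i 0 := fun i hi => by
      rw [perSeq, Nat.mod_eq_of_lt (by omega)]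
    rcases Nat.lt_or_gt_of_ne hd with h | h
    · left
      refine ⟨n, fun i hi => ?_, ?_⟩
      · rw [p1 i hi.le, hmin i hi]; rfl
      · rw [p1 n le_rfl]; exact h
    · right
      refine ⟨n, fun i hi => ?_, ?_⟩
      · rw [p2 i hi.le, ← hmin i hi]; rfl
      · rw [p2 n le_rfl]; exact h

/-- For any `β ∈ (1,2]`, β-Lyndon intervals generated by distinct
β-Lyndon words are disjoint. -/
theorem stmt_4 (β : ℝ) (hβ : β ∈ Set.Ioc (1 : ℝ) 2) (s s' : List ℕ)
    (hs : IsBetaLyndon β s) (hs' : IsBetaLyndon β s') (hne : s ≠ s') :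
    Set.Ico (lyndonLeft β s) (lyndonRight β s) ∩
      Set.Ico (lyndonLeft β s') (lyndonRight β s') = ∅ := by
  have h : seqLt (perSeq s) (wordSeq s') ∨ seqLt (perSeq s') (wordSeq s) := by
    rcases le_total s.length s'.length with hl | hl
    · exact comb hs hs' hl hne
    · exact (comb hs' hs hl hne.symm).symm
  rw [Set.eq_empty_iff_forall_notMem]
  rintro t ⟨⟨h1, h2⟩, ⟨h3, h4⟩⟩
  rcases h with h | h
  · linarith [le_of_seqLt hβ hs hs' h]
  · linarith [le_of_seqLt hβ hs' hs h]
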